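/- Let p be a prime and q a power of p with q ≠ 2 and q ≠ p². Let ℓ be an odd prime and t ≥ 1 an integer such that q is a primitive root modulo ℓ^t (i.e. q generates the multiplicative group of units modulo ℓ^t). Then h_q(2ℓ^t) = 0. -/

import Mathlib

noncomputable section

/-- The cyclic shift operator on `Fin n → F`, sending `(a_0, …, a_{n-1})`
to `(a_{n-1}, a_0, …, a_{n-2})`. -/
def cshift (F : Type*) [Field F] (n : ℕ) : (Fin n → F) →ₗ[F] (Fin n → F) where
  toFun a := a ∘ (finRotate n).symm
  map_add' _ _ := rfl
  map_smul' _ _ := rfl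

/-- A subspace `U ⊆ F^n` is cyclically covering if the union of its cyclic shifts is `F^n`. -/
def IsCyclicallyCovering {F : Type*} [Field F] {n : ℕ} (U : Submodule F (Fin n → F)) : Prop :=
  ⋃ i ∈ Finset.range n, ⇑(cshift F n ^ i) '' (U : Set (Fin n → F)) = Set.univ

/-- `hcc F n` is the largest possible codimension of a cyclically covering subspace of `F^n`. -/
def hcc (F : Type*) [Field F] (n : ℕ) : ℕ :=
  sSup {k : ℕ | ∃ U : Submodule F (Fin n → F),
    IsCyclicallyCovering U ∧ n - Module.finrank F U = k}

/-!
If `f ≠ 0` vanishes on a cyclically covering subspace, every vector `y` has a shift on which `f`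
vanishes. So it suffices to find, for each `f ≠ 0`, a `y` whose sequence `i ↦ f (σ ^ i y)` never
vanishes. These sequences form a nonzero space `W` invariant under the shift `S` of sequences and
killed by `S ^ (2m) - 1 = (S ^ m - 1) (S ^ m + 1)` with `m = ℓ ^ t`; multiplying by `(-1) ^ i`
exchanges the two factors, as `m` is odd, so `W` may be assumed to meet `ker (S ^ m - 1)`.
Since `X ^ m - 1` is the product of the irreducible `Φ_{ℓ ^ s}`, `s ≤ t`, some `ker Φ_{ℓ ^ s}(S)`
meets `W` and, being a simple `F[X]`-module, lies in `W`. For `s = 0` this kernel consists of the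
constant sequences; for `s = r + 1` it contains `i ↦ c ⌊i / ℓ ^ r⌋` for every function `c` on `ℤ/ℓ`
of sum zero, and over a field other than `𝔽₂` such a `c` can be chosen without zeros.
-/

open Polynomial

section ZeroSum

theorem exists_ne_and_ne_of_card_ne_two {α : Type*} (hα : Nat.card α ≠ 2) {a b : α} (hb : b ≠ a) :
    ∃ x : α, x ≠ a ∧ x ≠ b := by
  by_contra! h
  exact hα ((Nat.card_eq_two_iff' a).2 ⟨b, hb, h⟩)

variable {ι A : Type*} [AddCommGroup A]

theorem exists_forall_ne_zero_sum_eq (hA : Nat.card A ≠ 2) {s : Finset ι} (hs : s.Nonempty)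
    {b : A} (hb : b ≠ 0) : ∃ c : ι → A, (∀ i, c i ≠ 0) ∧ ∑ i ∈ s, c i = b := by
  classical
  induction hs using Finset.Nonempty.cons_induction generalizing b with
  | singleton i => exact ⟨fun _ ↦ b, fun _ ↦ hb, Finset.sum_singleton _ _⟩
  | cons i s hi _ ih =>
    obtain ⟨x, hx, hxb⟩ := exists_ne_and_ne_of_card_ne_two hA hb
    obtain ⟨c, hc, hsum⟩ := ih (sub_ne_zero.2 hxb.symm)
    refine ⟨Function.update c i x, (Function.forall_update_iff c fun _ y ↦ y ≠ 0).2
      ⟨hx, fun j _ ↦ hc j⟩, ?_⟩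
    rw [Finset.sum_cons, Function.update_self, Finset.sum_update_of_notMem hi, hsum,
      add_sub_cancel]

theorem exists_forall_ne_zero_sum_eq_zero [Fintype ι] [Nontrivial ι] [Nontrivial A]
    (hA : Nat.card A ≠ 2) : ∃ c : ι → A, (∀ i, c i ≠ 0) ∧ ∑ i, c i = 0 := by
  classical
  obtain ⟨x, hx⟩ := exists_ne (0 : A)
  obtain ⟨i, j, hij⟩ := exists_pair_ne ι
  obtain ⟨c, hc, hsum⟩ := exists_forall_ne_zero_sum_eq hA (s := Finset.univ.erase i)
    ⟨j, by simpa using hij.symm⟩ (neg_ne_zero.2 hx)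
  refine ⟨Function.update c i x, (Function.forall_update_iff c fun _ y ↦ y ≠ 0).2
    ⟨hx, fun j _ ↦ hc j⟩, ?_⟩
  rw [Finset.sum_update_of_mem (Finset.mem_univ i), ← Finset.erase_eq, hsum, add_neg_cancel]

end ZeroSum

theorem sum_range_natCast_zmod {M : Type*} [AddCommMonoid M] (n : ℕ) [NeZero n] (f : ZMod n → M) :
    ∑ j ∈ Finset.range n, f j = ∑ x, f x :=
  Finset.sum_nbij' (fun j ↦ (j : ZMod n)) ZMod.val (by simp)
    (fun x _ ↦ Finset.mem_range.2 x.val_lt)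
    (fun _ hj ↦ ZMod.val_cast_of_lt (Finset.mem_range.1 hj)) (by simp) (by simp)

theorem pow_apply_sub_mem_of_mem_invtSubmodule {R M : Type*} [CommRing R] [AddCommGroup M]
    [Module R M] {T : Module.End R M} {W : Submodule R M} (hW : W ∈ T.invtSubmodule) {x : M}
    (hx : x ∈ W) (k : ℕ) : (T ^ k) x - x ∈ W :=
  W.sub_mem (by simpa only [map_pow, aeval_X] using
    aeval_apply_smul_mem_of_le_comap hx (X ^ k) T hW) hx

section Shift

/-- The shift operator `(v₀, v₁, …) ↦ (v₁, v₂, …)` on sequences. For a polynomial `g`, the kernel of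
`aeval (seqShift R) g` is the space of solutions of the linear recurrence with characteristic
polynomial `g`. -/
def seqShift (R : Type*) [CommSemiring R] : Module.End R (ℕ → R) :=
  LinearMap.funLeft R R Nat.succ

section CommSemiring

variable {R : Type*} [CommSemiring R]

theorem seqShift_pow_apply (k : ℕ) (v : ℕ → R) (i : ℕ) : (seqShift R ^ k) v i = v (i + k) := by
  induction k generalizing i with
  | zero => rfl
  | succ k ih =>
    rw [pow_succ', Module.End.mul_apply, seqShift, LinearMap.funLeft_apply, ← seqShift, ih,
      Nat.succ_add_eq_add_succ]

theorem aeval_seqShift_apply (g : R[X]) (v : ℕ → R) (i : ℕ) :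
    aeval (seqShift R) g v i = ∑ j ∈ Finset.range (g.natDegree + 1), g.coeff j * v (i + j) := by
  simp only [aeval_eq_sum_range, LinearMap.sum_apply, LinearMap.smul_apply, Finset.sum_apply,
    Pi.smul_apply, seqShift_pow_apply, smul_eq_mul]

end CommSemiring

section CommRing

variable {R : Type*} [CommRing R]

theorem eq_zero_of_aeval_seqShift_eq_zero [NoZeroDivisors R] {g : R[X]} (hg : g ≠ 0) {v : ℕ → R}
    (hgv : aeval (seqShift R) g v = 0) (hv : ∀ i < g.natDegree, v i = 0) : v = 0 := by
  funext k
  induction k using Nat.strong_induction_on with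
  | _ k ih =>
    obtain hk | hk := lt_or_ge k g.natDegree
    · exact hv k hk
    · have hlow : ∀ j ∈ Finset.range g.natDegree, g.coeff j * v (k - g.natDegree + j) = 0 := by
        intro j hj
        rw [ih _ (by have := Finset.mem_range.1 hj; omega), Pi.zero_apply, mul_zero]
      have hrec := congrFun hgv (k - g.natDegree)
      rw [aeval_seqShift_apply, Finset.sum_range_succ, Finset.sum_eq_zero hlow, zero_add,
        Nat.sub_add_cancel hk, Pi.zero_apply] at hrec
      exact (mul_eq_zero.1 hrec).resolve_left (leadingCoeff_ne_zero.2 hg)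

theorem aeval_seqShift_cyclotomic_prime_pow_eq_zero {ℓ : ℕ} [Fact ℓ.Prime] (s : ℕ)
    {c : ZMod ℓ → R} (hc : ∑ x, c x = 0) :
    aeval (seqShift R) (cyclotomic (ℓ ^ (s + 1)) R) (fun i ↦ c (i / ℓ ^ s : ℕ)) = 0 := by
  have hℓ : ℓ.Prime := Fact.out
  funext i
  calc aeval (seqShift R) (cyclotomic (ℓ ^ (s + 1)) R) (fun i ↦ c (i / ℓ ^ s : ℕ)) i
      = ∑ j ∈ Finset.range ℓ, c ((i + ℓ ^ s * j) / ℓ ^ s : ℕ) := by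
        simp only [cyclotomic_prime_pow_eq_geom_sum hℓ, map_sum, map_pow, aeval_X,
          LinearMap.sum_apply, Finset.sum_apply, ← pow_mul, seqShift_pow_apply]
    _ = ∑ j ∈ Finset.range ℓ, c ((i / ℓ ^ s : ℕ) + j) := by
        simp only [Nat.add_mul_div_left _ _ (pow_pos hℓ.pos s), Nat.cast_add]
    _ = ∑ x, c ((i / ℓ ^ s : ℕ) + x) := sum_range_natCast_zmod ℓ fun x ↦ c ((i / ℓ ^ s : ℕ) + x)
    _ = 0 := (Equiv.sum_comp (Equiv.addLeft _) c).trans hc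

theorem exists_forall_ne_zero_aeval_seqShift_cyclotomic_eq_zero [Nontrivial R]
    (hR : Nat.card R ≠ 2) (ℓ : ℕ) [Fact ℓ.Prime] (s : ℕ) :
    ∃ w : ℕ → R, (∀ i, w i ≠ 0) ∧ aeval (seqShift R) (cyclotomic (ℓ ^ (s + 1)) R) w = 0 := by
  obtain ⟨c, hc, hsum⟩ := exists_forall_ne_zero_sum_eq_zero (ι := ZMod ℓ) hR
  exact ⟨_, fun i ↦ hc _, aeval_seqShift_cyclotomic_prime_pow_eq_zero s hsum⟩

end CommRing

section Field

variable {F : Type*} [Field F]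

theorem exists_aeval_seqShift_eq_of_irreducible {g : F[X]} (hg : Irreducible g) {v u : ℕ → F}
    (hv : v ≠ 0) (hgv : aeval (seqShift F) g v = 0) (hgu : aeval (seqShift F) g u = 0) :
    ∃ r : F[X], aeval (seqShift F) r v = u := by
  have hker (r : F[X]) : aeval (seqShift F) g (aeval (seqShift F) r v) = 0 := by
    rw [← Module.End.mul_apply, ← map_mul, mul_comm, map_mul, Module.End.mul_apply, hgv, map_zero]
  -- `P` sends the coefficients of `r`, `deg r < deg g`, to the first `deg g` terms of `r(S) v`.
  let P : (Fin g.natDegree → F) →ₗ[F] (Fin g.natDegree → F) :=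
    LinearMap.funLeft F F Fin.val ∘ₗ LinearMap.applyₗ v ∘ₗ (aeval (seqShift F)).toLinearMap ∘ₗ
      (degreeLT F g.natDegree).subtype ∘ₗ (degreeLTEquiv F g.natDegree).symm.toLinearMap
  have hinj : Function.Injective P := by
    refine (injective_iff_map_eq_zero P).2 fun a ha ↦ ?_
    set r := (degreeLTEquiv F g.natDegree).symm a with hr
    have hrv : aeval (seqShift F) (r : F[X]) v = 0 :=
      eq_zero_of_aeval_seqShift_eq_zero hg.ne_zero (hker r) fun i hi ↦ congrFun ha ⟨i, hi⟩
    suffices (r : F[X]) = 0 by simpa [hr] using this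
    by_contra hr0
    have hdeg : (r : F[X]).degree < g.degree := by
      rw [degree_eq_natDegree hg.ne_zero]
      exact mem_degreeLT.1 r.2
    have hcop : IsCoprime g r := hg.coprime_iff_not_dvd.2 (not_dvd_of_degree_lt hr0 hdeg)
    exact hv (Submodule.disjoint_def.1 (disjoint_ker_aeval_of_isCoprime _ hcop) v hgv hrv)
  obtain ⟨a, ha⟩ := LinearMap.injective_iff_surjective.1 hinj fun i ↦ u i
  refine ⟨(degreeLTEquiv F g.natDegree).symm a, sub_eq_zero.1 <|
    eq_zero_of_aeval_seqShift_eq_zero hg.ne_zero ?_ fun i hi ↦ ?_⟩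
  · rw [map_sub, hker, hgu, sub_zero]
  · exact sub_eq_zero.2 (congrFun ha ⟨i, hi⟩)

variable {W : Submodule F (ℕ → F)}

theorem ker_aeval_seqShift_le_of_irreducible (hW : W ∈ (seqShift F).invtSubmodule) {g : F[X]}
    (hg : Irreducible g) {v : ℕ → F} (hvW : v ∈ W) (hv : v ≠ 0)
    (hgv : aeval (seqShift F) g v = 0) : LinearMap.ker (aeval (seqShift F) g) ≤ W := by
  intro u hu
  obtain ⟨r, rfl⟩ := exists_aeval_seqShift_eq_of_irreducible hg hv hgv hu
  exact aeval_apply_smul_mem_of_le_comap hvW r _ hW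

variable {ℓ t : ℕ}

theorem exists_mem_forall_ne_zero_of_seqShift_pow_eq_self (hF : Nat.card F ≠ 2) (hℓ : ℓ.Prime)
    (hirr : Irreducible (cyclotomic (ℓ ^ t) F)) (hW : W ∈ (seqShift F).invtSubmodule) {v : ℕ → F}
    (hvW : v ∈ W) (hv : v ≠ 0) (hper : (seqShift F ^ ℓ ^ t) v = v) :
    ∃ w ∈ W, ∀ i, w i ≠ 0 := by
  induction t generalizing v with
  | zero =>
    have hsucc (i : ℕ) : v (i + 1) = v i := by
      simpa only [pow_zero, seqShift_pow_apply] using congrFun hper i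
    have hconst (i : ℕ) : v i = v 0 := by
      induction i with
      | zero => rfl
      | succ i ih => rw [hsucc, ih]
    obtain ⟨j, hj⟩ := Function.ne_iff.1 hv
    exact ⟨v, hvW, fun i ↦ by rwa [hconst i, ← hconst j]⟩
  | succ s ih =>
    by_cases hs : (seqShift F ^ ℓ ^ s) v = v
    · exact ih (cyclotomic_irreducible_pow_of_irreducible_pow hℓ s.le_succ hirr) hvW hv hs
    · have : Fact ℓ.Prime := ⟨hℓ⟩
      have hker : aeval (seqShift F) (cyclotomic (ℓ ^ (s + 1)) F) ((seqShift F ^ ℓ ^ s) v - v)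
          = 0 := by
        have h := congrArg (fun g ↦ aeval (seqShift F) g v)
          (cyclotomic_prime_pow_mul_X_pow_sub_one F ℓ s)
        simpa [hper] using h
      obtain ⟨w, hw, hgw⟩ :=
        exists_forall_ne_zero_aeval_seqShift_cyclotomic_eq_zero hF ℓ s
      exact ⟨w, ker_aeval_seqShift_le_of_irreducible hW hirr
        (pow_apply_sub_mem_of_mem_invtSubmodule hW hvW _) (sub_ne_zero.2 hs) hker hgw, hw⟩

theorem exists_mem_forall_ne_zero_of_seqShift_pow_eq_smul (hF : Nat.card F ≠ 2) (hℓ : ℓ.Prime)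
    (hirr : Irreducible (cyclotomic (ℓ ^ t) F)) (hW : W ∈ (seqShift F).invtSubmodule) {a : F}
    (ha : a ≠ 0) {v : ℕ → F} (hvW : v ∈ W) (hv : v ≠ 0)
    (hper : (seqShift F ^ ℓ ^ t) v = a ^ ℓ ^ t • v) :
    ∃ w ∈ W, ∀ i, w i ≠ 0 := by
  let D : Module.End F (ℕ → F) := LinearMap.mulLeft F fun i ↦ a ^ i
  have hD (u i) : D u i = a ^ i * u i := rfl
  have hDW : W.comap D ∈ (seqShift F).invtSubmodule := by
    intro u hu
    have hcomm : D (seqShift F u) = a⁻¹ • seqShift F (D u) := by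
      funext i
      simp [hD, seqShift, LinearMap.funLeft_apply, pow_succ', mul_assoc, ha]
    rw [Submodule.mem_comap, Submodule.mem_comap, hcomm]
    exact W.smul_mem _ (hW hu)
  have hDv : D (fun i ↦ (a ^ i)⁻¹ * v i) = v := by
    funext i
    rw [hD, mul_inv_cancel_left₀ (pow_ne_zero i ha)]
  obtain ⟨w, hw, hw0⟩ := exists_mem_forall_ne_zero_of_seqShift_pow_eq_self hF hℓ hirr hDW
    (v := fun i ↦ (a ^ i)⁻¹ * v i) (by rwa [Submodule.mem_comap, hDv])
    (fun h ↦ hv (by rw [← hDv, h, map_zero])) (by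
      funext i
      have hi : v (i + ℓ ^ t) = a ^ ℓ ^ t * v i := by
        simpa [seqShift_pow_apply] using congrFun hper i
      rw [seqShift_pow_apply, hi, pow_add, mul_inv, mul_assoc,
        inv_mul_cancel_left₀ (pow_ne_zero _ ha)])
  exact ⟨D w, hw, fun i ↦ mul_ne_zero (pow_ne_zero i ha) (hw0 i)⟩

theorem exists_mem_forall_ne_zero_of_seqShift_pow_two_mul_eq_self (hF : Nat.card F ≠ 2)
    (hℓ : ℓ.Prime) (hodd : Odd ℓ) (hirr : Irreducible (cyclotomic (ℓ ^ t) F))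
    (hW : W ∈ (seqShift F).invtSubmodule) {v : ℕ → F} (hvW : v ∈ W) (hv : v ≠ 0)
    (hper : (seqShift F ^ (2 * ℓ ^ t)) v = v) : ∃ w ∈ W, ∀ i, w i ≠ 0 := by
  by_cases ht : (seqShift F ^ ℓ ^ t) v = v
  · exact exists_mem_forall_ne_zero_of_seqShift_pow_eq_self hF hℓ hirr hW hvW hv ht
  · refine exists_mem_forall_ne_zero_of_seqShift_pow_eq_smul hF hℓ hirr hW
      (neg_ne_zero.2 one_ne_zero) (pow_apply_sub_mem_of_mem_invtSubmodule hW hvW (ℓ ^ t))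
      (sub_ne_zero.2 ht) ?_
    rw [hodd.pow.neg_one_pow, map_sub, ← Module.End.mul_apply, ← pow_add, ← two_mul, hper,
      neg_one_smul, neg_sub]

end Field

end Shift

section DualOrbit

variable {R M : Type*} [CommSemiring R] [AddCommMonoid M] [Module R M]

/-- The linear map sending `x` to the sequence `i ↦ f (T ^ i x)` of values of the functional `f`
along the orbit of `x`; it intertwines `T` with `seqShift R`. -/
def dualOrbit (T : Module.End R M) (f : Module.Dual R M) : M →ₗ[R] (ℕ → R) :=
  LinearMap.pi fun i ↦ f ∘ₗ T ^ i

theorem seqShift_pow_dualOrbit (T : Module.End R M) (f : Module.Dual R M) (k : ℕ) (x : M) :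
    (seqShift R ^ k) (dualOrbit T f x) = dualOrbit T f ((T ^ k) x) := by
  funext i
  simp only [seqShift_pow_apply, dualOrbit, LinearMap.pi_apply, LinearMap.comp_apply, pow_add,
    Module.End.mul_apply]

theorem range_dualOrbit_mem_invtSubmodule (T : Module.End R M) (f : Module.Dual R M) :
    LinearMap.range (dualOrbit T f) ∈ (seqShift R).invtSubmodule := by
  rintro _ ⟨x, rfl⟩
  exact ⟨T x, by simpa using (seqShift_pow_dualOrbit T f 1 x).symm⟩

theorem exists_forall_dual_pow_apply_ne_zero {F V : Type*} [Field F] [AddCommGroup V]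
    [Module F V] (hF : Nat.card F ≠ 2) {ℓ t : ℕ} (hℓ : ℓ.Prime) (hodd : Odd ℓ)
    (hirr : Irreducible (cyclotomic (ℓ ^ t) F)) {T : Module.End F V}
    (hT : T ^ (2 * ℓ ^ t) = 1) {f : Module.Dual F V} (hf : f ≠ 0) :
    ∃ y, ∀ i, f ((T ^ i) y) ≠ 0 := by
  obtain ⟨x, hx⟩ := DFunLike.ne_iff.1 hf
  have hx0 : dualOrbit T f x ≠ 0 := fun h ↦ hx (congrFun h 0)
  obtain ⟨_, ⟨y, rfl⟩, hy⟩ := exists_mem_forall_ne_zero_of_seqShift_pow_two_mul_eq_self hF hℓ hodd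
    hirr (range_dualOrbit_mem_invtSubmodule T f) ⟨x, rfl⟩ hx0
    (by rw [seqShift_pow_dualOrbit, hT, Module.End.one_apply])
  exact ⟨y, hy⟩

end DualOrbit

section CyclicShift

variable {F : Type*} [Field F] {n : ℕ}

theorem finRotate_pow_self (n : ℕ) : finRotate n ^ n = 1 := by
  obtain hn | hn := lt_or_ge n 2
  · have : Subsingleton (Fin n) := Fin.subsingleton_iff_le_one.2 (by omega)
    exact Subsingleton.elim _ _
  · have horder : orderOf (finRotate n) = n := by
      rw [(isCycle_finRotate_of_le hn).orderOf, support_finRotate_of_le hn, Finset.card_fin]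
    exact orderOf_dvd_iff_pow_eq_one.1 horder.dvd

theorem cshift_pow_apply (k : ℕ) (a : Fin n → F) :
    (cshift F n ^ k) a = a ∘ ((finRotate n)⁻¹ ^ k : Equiv.Perm (Fin n)) := by
  induction k with
  | zero => rfl
  | succ k ih => rw [pow_succ', Module.End.mul_apply, ih, pow_succ]; rfl

theorem cshift_pow_self (F : Type*) [Field F] (n : ℕ) : cshift F n ^ n = 1 := by
  refine LinearMap.ext fun a ↦ ?_
  rw [cshift_pow_apply, inv_pow, finRotate_pow_self, inv_one]
  rfl

theorem IsCyclicallyCovering.eq_top {U : Submodule F (Fin n → F)} (hU : IsCyclicallyCovering U)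
    (h : ∀ f : Module.Dual F (Fin n → F), f ≠ 0 → ∃ y, ∀ i, f ((cshift F n ^ i) y) ≠ 0) :
    U = ⊤ := by
  by_contra hne
  obtain ⟨f, hf, hUf⟩ := U.exists_le_ker_of_lt_top (lt_top_iff_ne_top.2 hne)
  obtain ⟨y, hy⟩ := h f hf
  have hyU : y ∈ ⋃ i ∈ Finset.range n, ⇑(cshift F n ^ i) '' (U : Set (Fin n → F)) :=
    hU.symm ▸ Set.mem_univ y
  simp only [Set.mem_iUnion, Finset.mem_range] at hyU
  obtain ⟨i, hi, u, hu, rfl⟩ := hyU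
  refine hy (n - i) ?_
  rw [← Module.End.mul_apply, ← pow_add, Nat.sub_add_cancel hi.le, cshift_pow_self]
  exact hUf hu

theorem hcc_eq_zero_of_forall_dual
    (h : ∀ f : Module.Dual F (Fin n → F), f ≠ 0 → ∃ y, ∀ i, f ((cshift F n ^ i) y) ≠ 0) :
    hcc F n = 0 := by
  refine Nat.eq_zero_of_le_zero (csSup_le' ?_)
  rintro _ ⟨U, hU, rfl⟩
  rw [hU.eq_top h, finrank_top, Module.finrank_fin_fun, Nat.sub_self]

end CyclicShift

theorem irreducible_cyclotomic_of_orderOf_card_eq_totient {F : Type*} [Field F] [Fintype F] {n : ℕ}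
    (hn : 0 < n) (h : orderOf (Fintype.card F : ZMod n) = n.totient) :
    Irreducible (cyclotomic n F) := by
  obtain ⟨p, _, e, hp, hcard⟩ := FiniteField.card' F
  have : Fact p.Prime := ⟨hp⟩
  have hunit : IsUnit (Fintype.card F : ZMod n) :=
    (orderOf_pos_iff.1 (h ▸ Nat.totient_pos.2 hn)).isUnit
  rw [hcard, ZMod.isUnit_iff_coprime, Nat.coprime_pow_left_iff e.pos] at hunit
  refine irreducible_of_dvd_cyclotomic_of_natDegree hcard hunit dvd_rfl ?_
  rw [natDegree_cyclotomic, ← h, ← orderOf_units, ZMod.coe_unitOfCoprime, hcard]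

theorem stmt12_general {F : Type*} [Field F] (hF : Nat.card F ≠ 2) {ℓ t : ℕ} (hℓ : ℓ.Prime)
    (hodd : Odd ℓ) (hirr : Irreducible (cyclotomic (ℓ ^ t) F)) : hcc F (2 * ℓ ^ t) = 0 :=
  hcc_eq_zero_of_forall_dual fun _ hf ↦
    exists_forall_dual_pow_apply_ne_zero hF hℓ hodd hirr (cshift_pow_self F _) hf

/-- Let `q` be a power of a prime `p` with `q ≠ 2` and `q ≠ p²`, and let `ℓ` be an odd
prime such that `q` is a primitive root modulo `ℓ^t` (`t ≥ 1`).  Then `h_q(2ℓ^t) = 0`. -/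
theorem stmt12 (F : Type*) [Field F] [Fintype F]
    (p : ℕ) (hp : p.Prime) (e : ℕ) (he : 0 < e)
    (hcard : Fintype.card F = p ^ e)
    (hq2 : Fintype.card F ≠ 2) (hqp2 : Fintype.card F ≠ p ^ 2)
    (ℓ : ℕ) (hl : ℓ.Prime) (hlodd : Odd ℓ) (t : ℕ) (ht : 1 ≤ t)
    (hprim : orderOf ((Fintype.card F : ℕ) : ZMod (ℓ ^ t)) = (ℓ ^ t).totient) :
    hcc F (2 * ℓ ^ t) = 0 := by
  exact stmt12_general (by rwa [Nat.card_eq_fintype_card]) hl hlodd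
    (irreducible_cyclotomic_of_orderOf_card_eq_totient (pow_pos hl.pos t) hprim)
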